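/- Let f be a nontrivial rotation of the plane about a center P ∈ ℝ² (i.e., f(x) = P + R(x − P) with R ∈ SO(2), R ≠ I), and let S ⊆ ℝ² be a finite set with f(S) = S that contains at least one point different from P. Then f has finite order at most |S|: there exists an integer k with 1 ≤ k ≤ |S| such that the k-fold composition f^k is the identity map of ℝ². In particular, the rotation angle of f is a rational multiple of 2π. -/

import Mathlib

open Polynomial Matrix RealInnerProductSpace

noncomputable section

/-!
By pigeonhole, a point `y ≠ P` of `S` returns to itself after some `k ≤ |S|` steps. Relative to the
center this says that `R ^ k ∈ SO(2)` fixes the nonzero vector `y - P`. A matrix `M ∈ SO(2)` with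
first row `(a, b)` has `det (M - 1) = (a - 1) ^ 2 + b ^ 2`, so it fixes a nonzero vector only if
it is the identity.
-/

theorem exists_isPeriodicPt_le_ncard {α : Type*} {f : α → α} {S : Set α} (hS : S.Finite)
    (hmaps : Set.MapsTo f S S) (hinj : Set.InjOn f S) {y : α} (hy : y ∈ S) :
    ∃ k, 1 ≤ k ∧ k ≤ S.ncard ∧ Function.IsPeriodicPt f k y := by
  have := hS.fintype
  let g : S → S := hmaps.restrict f S S
  have hg : g.Injective := hmaps.restrict_inj.mpr hinj
  refine ⟨g.minimalPeriod ⟨y, hy⟩,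
    Function.minimalPeriod_pos_of_mem_periodicPts (hg.mem_periodicPts _), ?_, ?_⟩
  · rw [← Nat.card_coe_set_eq, Nat.card_eq_fintype_card]
    exact Function.minimalPeriod_le_card
  · exact (Function.isPeriodicPt_minimalPeriod g ⟨y, hy⟩).map
      (g := Subtype.val) fun _ => rfl

section SpecialOrthogonalTwo

variable {K : Type*} [CommRing K] {M : Matrix (Fin 2) (Fin 2) K}

theorem det_sub_one_of_mem_specialOrthogonalGroup_fin_two
    (hM : M ∈ specialOrthogonalGroup (Fin 2) K) :
    (M - 1).det = (M 0 0 - 1) ^ 2 + M 0 1 ^ 2 := by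
  obtain ⟨hdiag, hoff, -⟩ := mem_specialOrthogonalGroup_fin_two_iff.mp hM
  simp only [det_fin_two, Matrix.sub_apply, one_apply_eq,
    one_apply_ne zero_ne_one, one_apply_ne one_ne_zero, ← hdiag, hoff]
  ring

variable [LinearOrder K] [IsStrictOrderedRing K]

theorem eq_one_of_mem_specialOrthogonalGroup_fin_two_of_mulVec_eq_self
    (hM : M ∈ specialOrthogonalGroup (Fin 2) K) {v : Fin 2 → K} (hv : v ≠ 0)
    (hfix : M *ᵥ v = v) : M = 1 := by
  have hdet : (M - 1).det = 0 :=
    exists_mulVec_eq_zero_iff.mp ⟨v, hv, by rw [sub_mulVec, hfix, one_mulVec, sub_self]⟩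
  rw [det_sub_one_of_mem_specialOrthogonalGroup_fin_two hM,
    add_eq_zero_iff_of_nonneg (sq_nonneg _) (sq_nonneg _), sq_eq_zero_iff, sq_eq_zero_iff,
    sub_eq_zero] at hdet
  obtain ⟨h00, h01⟩ := hdet
  obtain ⟨hdiag, hoff, -⟩ := mem_specialOrthogonalGroup_fin_two_iff.mp hM
  have h11 : M 1 1 = 1 := hdiag ▸ h00
  have h10 : M 1 0 = 0 := neg_eq_zero.mp (hoff ▸ h01)
  rw [eta_fin_two M, h00, h01, h10, h11, one_fin_two]

end SpecialOrthogonalTwo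

section Semiconj

variable {ι α K : Type*} [Fintype ι] [DecidableEq ι] [Semiring K]
  {M : Matrix ι ι K} {f : α → α} {g : α → ι → K}

theorem iterate_mulVec (M : Matrix ι ι K) (k : ℕ) : (M *ᵥ ·)^[k] = (M ^ k *ᵥ ·) := by
  induction k with
  | zero => simp only [Function.iterate_zero, pow_zero, one_mulVec, Function.id_def]
  | succ k ih => simp only [Function.iterate_succ', ih, Function.comp_def, mulVec_mulVec, pow_succ']

theorem apply_iterate_of_semiconj_mulVec (h : Function.Semiconj g f (M *ᵥ ·)) (k : ℕ) (x : α) :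
    g (f^[k] x) = M ^ k *ᵥ g x :=
  (h.iterate_right k x).trans (congrFun (iterate_mulVec M k) (g x))

theorem iterate_eq_id_of_semiconj_mulVec (hg : g.Injective)
    (h : Function.Semiconj g f (M *ᵥ ·)) {k : ℕ} (hk : M ^ k = 1) : f^[k] = id := by
  funext x
  apply hg
  rw [apply_iterate_of_semiconj_mulVec h, hk, one_mulVec, id]

end Semiconj

section Displacement

variable {ι : Type*} {P x : EuclideanSpace ℝ ι}

/-- The coordinate vector of `x - P`, a plain function so that matrices act on it by `mulVec`.
It conjugates an affine map fixing `P` to its linear part. -/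
def displacement (P x : EuclideanSpace ℝ ι) : ι → ℝ := fun j => x j - P j

theorem displacement_injective (P : EuclideanSpace ℝ ι) : (displacement P).Injective :=
  fun _ _ h => PiLp.ext fun j => sub_left_injective (congrFun h j)

theorem displacement_ne_zero (hx : x ≠ P) : displacement P x ≠ 0 :=
  fun h => hx <| PiLp.ext fun j => sub_eq_zero.mp (congrFun h j)

theorem semiconj_displacement [Fintype ι] {R : Matrix ι ι ℝ}
    {f : EuclideanSpace ℝ ι → EuclideanSpace ℝ ι}
    (hf : ∀ x i, f x i = P i + (R *ᵥ displacement P x) i) :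
    Function.Semiconj (displacement P) f (R *ᵥ ·) :=
  fun x => funext fun i => sub_eq_of_eq_add' (hf x i)

end Displacement

/-- Let `f` be a nontrivial rotation of the plane about a center `P ∈ ℝ²`
(i.e., `f(x) = P + R(x − P)` with `R ∈ SO(2)`, `R ≠ I`), and let `S ⊆ ℝ²` be a finite set with
`f(S) = S` containing at least one point different from `P`. Then `f` has finite order at most
`|S|`: there exists an integer `k` with `1 ≤ k ≤ |S|` such that the `k`-fold composition `f^k`
is the identity map of `ℝ²`. -/
theorem statement_16 (P : EuclideanSpace ℝ (Fin 2)) (R : Matrix (Fin 2) (Fin 2) ℝ)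
    (hR : R ∈ Matrix.specialOrthogonalGroup (Fin 2) ℝ) (hR1 : R ≠ 1)
    (f : EuclideanSpace ℝ (Fin 2) → EuclideanSpace ℝ (Fin 2))
    (hf : ∀ x i, f x i = P i + R.mulVec (fun j => x j - P j) i)
    (S : Set (EuclideanSpace ℝ (Fin 2))) (hS : S.Finite) (hfS : f '' S = S)
    (hpt : ∃ y ∈ S, y ≠ P) :
    ∃ k : ℕ, 1 ≤ k ∧ k ≤ S.ncard ∧ f^[k] = id := by
  obtain ⟨y, hyS, hyP⟩ := hpt
  have hinj : S.InjOn f := Set.injOn_of_ncard_image_eq (by rw [hfS]) hS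
  obtain ⟨k, hk_pos, hk_le, hk⟩ :=
    exists_isPeriodicPt_le_ncard hS (Set.mapsTo_iff_image_subset.mpr hfS.subset) hinj hyS
  have hsemi : Function.Semiconj (displacement P) f (R *ᵥ ·) := semiconj_displacement hf
  have hfix : R ^ k *ᵥ displacement P y = displacement P y := by
    rw [← apply_iterate_of_semiconj_mulVec hsemi, hk.eq]
  have hpow : R ^ k = 1 := eq_one_of_mem_specialOrthogonalGroup_fin_two_of_mulVec_eq_self
    (pow_mem hR k) (displacement_ne_zero hyP) hfix
  exact ⟨k, hk_pos, hk_le,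
    iterate_eq_id_of_semiconj_mulVec (displacement_injective P) hsemi hpow⟩
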